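/- For every D > 0 there exist positive constants C₁, C₂, M̃ and B₀ such that for all M > M̃, all B > B₀, all m ∈ ℤ with |δ̃₁| ≤ D, and all ψ in the form domain of q_m: q_m[ψ] ≥ ∫_{ℝ²₊} W_B(ρ)·|ψ(τ,ρ)|² dτ dρ, where W_B(ρ) = Θ₀ + C₁·B^{−1/3} for |ρ| < M and W_B(ρ) = Θ₀ + C₂·M⁴·B^{−1/3} for |ρ| ≥ M. -/

import Mathlib

noncomputable section
open MeasureTheory Real Filter Set Topology

/-- The de Gennes energy `λ₁^𝒢(ξ)`. -/
def deGennes (ξ : ℝ) : ℝ :=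
  sInf { q : ℝ | ∃ u : ℝ → ℂ, ContDiff ℝ 1 u ∧
    IntegrableOn (fun t => ‖u t‖ ^ 2) (Ioi 0) ∧
    IntegrableOn (fun t => ‖deriv u t‖ ^ 2 + (t + ξ) ^ 2 * ‖u t‖ ^ 2) (Ioi 0) ∧
    0 < (∫ t in Ioi (0:ℝ), ‖u t‖ ^ 2) ∧
    q = (∫ t in Ioi (0:ℝ), (‖deriv u t‖ ^ 2 + (t + ξ) ^ 2 * ‖u t‖ ^ 2)) /
        ∫ t in Ioi (0:ℝ), ‖u t‖ ^ 2 }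

/-- `Θ₀`, the infimum of the de Gennes energy. -/
def Theta0 : ℝ := ⨅ ξ : ℝ, deGennes ξ

/-- The half plane `ℝ²₊ = {(τ, ρ) : τ > 0}`. -/
def halfPlane : Set (ℝ × ℝ) := Ioi (0:ℝ) ×ˢ (univ : Set ℝ)

/-- The potential of the effective operator `Q_m(B)`. -/
def qPot (B : ℝ) (m : ℤ) (p : ℝ × ℝ) : ℝ :=
  (p.1 + ((m : ℝ) - B / 2) / Real.sqrt B + B ^ (-(1:ℝ)/6) * p.2 ^ 2 / 2) ^ 2

/-- The integrand of the quadratic form `q_m`. -/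
def qIntegrand (B : ℝ) (m : ℤ) (ψ : ℝ × ℝ → ℂ) (p : ℝ × ℝ) : ℝ :=
  ‖fderiv ℝ ψ p (1, 0)‖ ^ 2 + qPot B m p * ‖ψ p‖ ^ 2
    + B ^ (-(1:ℝ)/3) * ‖fderiv ℝ ψ p (0, 1)‖ ^ 2

/-- The quadratic form `q_m[ψ]`. -/
def qForm (B : ℝ) (m : ℤ) (ψ : ℝ × ℝ → ℂ) : ℝ :=
  ∫ p in halfPlane, qIntegrand B m ψ p

/-- Membership in the form domain of `q_m`. -/
def InFormDomain (B : ℝ) (m : ℤ) (ψ : ℝ × ℝ → ℂ) : Prop :=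
  ContDiff ℝ 1 ψ ∧ IntegrableOn (fun p => ‖ψ p‖ ^ 2) halfPlane ∧
    IntegrableOn (qIntegrand B m ψ) halfPlane

/-- The rescaled momentum `δ̃₁ = ((m - B/2)/√B - ξ₀)·B^{1/6}`. -/
def delta1 (B : ℝ) (m : ℤ) (ξ₀ : ℝ) : ℝ :=
  (((m : ℝ) - B / 2) / Real.sqrt B - ξ₀) * B ^ ((1:ℝ)/6)

/-- Second derivative in the `τ` direction. -/
def d2τ (ψ : ℝ × ℝ → ℂ) (p : ℝ × ℝ) : ℂ :=
  fderiv ℝ (fun q => fderiv ℝ ψ q ((1:ℝ), (0:ℝ))) p (1, 0)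

/-- Second derivative in the `ρ` direction. -/
def d2ρ (ψ : ℝ × ℝ → ℂ) (p : ℝ × ℝ) : ℂ :=
  fderiv ℝ (fun q => fderiv ℝ ψ q ((0:ℝ), (1:ℝ))) p (0, 1)

/-- An eigenfunction of the model operator `Q_m(B)` on the half plane, with Neumann
boundary condition at `τ = 0`, eigenvalue `lam`, which is nonzero, smooth up to the
boundary, and lies in `L²` together with its first derivatives. -/
def IsQEigenfunction (B : ℝ) (m : ℤ) (lam : ℝ) (ψ : ℝ × ℝ → ℂ) : Prop :=
  ContDiff ℝ (⊤ : ℕ∞) ψ ∧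
  IntegrableOn (fun p => ‖ψ p‖ ^ 2) halfPlane ∧
  IntegrableOn (fun p => ‖fderiv ℝ ψ p ((1:ℝ), (0:ℝ))‖ ^ 2) halfPlane ∧
  IntegrableOn (fun p => ‖fderiv ℝ ψ p ((0:ℝ), (1:ℝ))‖ ^ 2) halfPlane ∧
  0 < (∫ p in halfPlane, ‖ψ p‖ ^ 2) ∧
  (∀ p ∈ halfPlane,
    -d2τ ψ p - ((B ^ (-(1:ℝ)/3) : ℝ) : ℂ) * d2ρ ψ p + ((qPot B m p : ℝ) : ℂ) * ψ p
      = (lam : ℂ) * ψ p) ∧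
  (∀ ρ : ℝ, fderiv ℝ ψ ((0:ℝ), ρ) ((1:ℝ), (0:ℝ)) = 0)

/-!
Completing the square, `∫ ‖u' + f u‖² ≥ 0`, bounds `∫ ‖u'‖²` from below by `∫ (f' - f²) ‖u‖²` for
every function `f`. In the half-line problem the ideal choice is `F = -φ' / φ`, with `φ` the
solution of `-φ'' + y² φ = Θ₀ φ` that decays at `+∞`: then `F' - F² + y² = Θ₀` exactly, and the
boundary term left over is `F ξ ‖u 0‖²`. Testing the de Gennes form with the translates of `φ`
gives `F ≥ 0`, so there is room to perturb: replacing `F` by `F - ε (2 - arctan)` with `ε`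
comparable to `min 1 (F ξ)` shows that `λ₁^𝒢 ξ - Θ₀` is at least a multiple of `min 1 (F ξ)`, as
long as `ξ` is bounded below. Hence `F ξ₀ = 0`; as a zero of `F` is a minimum, the Riccati equation
yields `Θ₀ = ξ₀²`, and integrating it from `ξ₀` makes `F`, and with it `λ₁^𝒢 - Θ₀`, grow
quadratically to the right of `ξ₀`.

On the half plane each fibre in `τ` is a de Gennes problem with momentum
`ξ₀ + B^(-1/6) (δ̃₁ + ρ² / 2)`, so it contributes `Θ₀ + c B^(-1/3) (δ̃₁ + ρ² / 2)₊²`. This gains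
nothing where `δ̃₁ + ρ² / 2 ≤ 0`, a bounded set of `ρ`; there the tangential kinetic energy gives
the missing constant, again by completing the square, with `f = ε arctan ρ`.
-/

section CompletingTheSquare

variable {α E : Type*} [MeasurableSpace α] {μ : Measure α} [NormedAddCommGroup E]
  {f f' : α → ℝ} {u v : α → E}

lemma integrable_mul_norm_sq (hf : AEStronglyMeasurable f μ)
    (hu : Integrable (fun t => ‖u t‖ ^ 2) μ)
    (hfu : Integrable (fun t => f t ^ 2 * ‖u t‖ ^ 2) μ) :
    Integrable (fun t => f t * ‖u t‖ ^ 2) μ := by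
  refine (hu.add hfu).mono' (hf.mul hu.aestronglyMeasurable) (ae_of_all _ fun t => ?_)
  have hf_le : |f t| ≤ 1 + f t ^ 2 := by nlinarith [sq_abs (f t), sq_nonneg (|f t| - 1)]
  simp only [norm_mul, norm_eq_abs, norm_pow, abs_norm, Pi.add_apply]
  nlinarith [mul_le_mul_of_nonneg_right hf_le (sq_nonneg ‖u t‖)]

variable [InnerProductSpace ℝ E]

lemma norm_add_smul_sq (c : ℝ) (x y : E) :
    ‖y + c • x‖ ^ 2 = ‖y‖ ^ 2 + c * (2 * inner ℝ x y) + c ^ 2 * ‖x‖ ^ 2 := by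
  rw [norm_add_sq_real, inner_smul_right, real_inner_comm, norm_smul, mul_pow, norm_eq_abs, sq_abs]
  ring

lemma integrable_mul_inner (hf : AEStronglyMeasurable f μ) (hu : AEStronglyMeasurable u μ)
    (hv : AEStronglyMeasurable v μ) (hfu : Integrable (fun t => f t ^ 2 * ‖u t‖ ^ 2) μ)
    (hv2 : Integrable (fun t => ‖v t‖ ^ 2) μ) :
    Integrable (fun t => f t * (2 * inner ℝ (u t) (v t))) μ := by
  refine (hfu.add hv2).mono' (hf.mul ((hu.inner hv).const_mul 2)) (ae_of_all _ fun t => ?_)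
  have hplus := sq_nonneg ‖v t + f t • u t‖
  have hminus := sq_nonneg ‖v t + (-f t) • u t‖
  rw [norm_add_smul_sq] at hplus hminus
  simp only [norm_eq_abs, abs_le, Pi.add_apply]
  constructor <;> linarith

lemma integral_norm_add_smul_sq (hf : AEStronglyMeasurable f μ) (hu : AEStronglyMeasurable u μ)
    (hv : AEStronglyMeasurable v μ) (hfu : Integrable (fun t => f t ^ 2 * ‖u t‖ ^ 2) μ)
    (hf'u : Integrable (fun t => f' t * ‖u t‖ ^ 2) μ) (hv2 : Integrable (fun t => ‖v t‖ ^ 2) μ) :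
    ∫ t, ‖v t + f t • u t‖ ^ 2 ∂μ =
      (∫ t, ‖v t‖ ^ 2 ∂μ) - (∫ t, (f' t - f t ^ 2) * ‖u t‖ ^ 2 ∂μ) +
        ∫ t, (f' t * ‖u t‖ ^ 2 + f t * (2 * inner ℝ (u t) (v t))) ∂μ := by
  have hdiff : Integrable (fun t => (f' t - f t ^ 2) * ‖u t‖ ^ 2) μ := by
    simpa only [sub_mul] using hf'u.sub' hfu
  have hcross := hf'u.fun_add (integrable_mul_inner hf hu hv hfu hv2)
  rw [← integral_sub hv2 hdiff, ← integral_add (hv2.sub' hdiff) hcross]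
  refine integral_congr_ae (ae_of_all _ fun t => ?_)
  simp only [norm_add_smul_sq]
  ring

end CompletingTheSquare

section RiccatiIdentity

variable {E : Type*} [NormedAddCommGroup E] [InnerProductSpace ℝ E]
  {f f' : ℝ → ℝ} {u : ℝ → E}

lemma hasDerivAt_mul_norm_sq (hf : ∀ t, HasDerivAt f (f' t) t) (hu : ContDiff ℝ 1 u) (t : ℝ) :
    HasDerivAt (fun t => f t * ‖u t‖ ^ 2)
      (f' t * ‖u t‖ ^ 2 + f t * (2 * inner ℝ (u t) (deriv u t))) t :=
  (hf t).mul (hu.differentiable one_ne_zero t).hasDerivAt.norm_sq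

lemma integral_Ioi_norm_deriv_add_smul_sq (a : ℝ) (hf : ∀ t, HasDerivAt f (f' t) t)
    (hu : ContDiff ℝ 1 u) (hu2 : IntegrableOn (fun t => ‖u t‖ ^ 2) (Ioi a))
    (hdu : IntegrableOn (fun t => ‖deriv u t‖ ^ 2) (Ioi a))
    (hfu : IntegrableOn (fun t => f t ^ 2 * ‖u t‖ ^ 2) (Ioi a))
    (hf'u : IntegrableOn (fun t => f' t * ‖u t‖ ^ 2) (Ioi a)) :
    ∫ t in Ioi a, ‖deriv u t + f t • u t‖ ^ 2 =
      (∫ t in Ioi a, ‖deriv u t‖ ^ 2) - (∫ t in Ioi a, (f' t - f t ^ 2) * ‖u t‖ ^ 2)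
        - f a * ‖u a‖ ^ 2 := by
  have hfm := (continuous_iff_continuousAt.2 fun t => (hf t).continuousAt).aestronglyMeasurable
    (μ := volume.restrict (Ioi a))
  have hum := hu.continuous.aestronglyMeasurable (μ := volume.restrict (Ioi a))
  have hdum := (hu.continuous_deriv le_rfl).aestronglyMeasurable (μ := volume.restrict (Ioi a))
  have hderiv := fun t (_ : t ∈ Ici a) => hasDerivAt_mul_norm_sq hf hu t
  have hint := hf'u.add (integrable_mul_inner hfm hum hdum hfu hdu)
  have hlim := tendsto_zero_of_hasDerivAt_of_integrableOn_Ioi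
    (fun t ht => hderiv t (mem_Ici_of_Ioi ht)) hint (integrable_mul_norm_sq hfm hu2 hfu)
  rw [integral_norm_add_smul_sq hfm hum hdum hfu hf'u hdu,
    integral_Ioi_of_hasDerivAt_of_tendsto' hderiv hint hlim]
  ring

lemma integral_riccati_mul_norm_sq_le {C : ℝ} (hf : ∀ t, HasDerivAt f (f' t) t)
    (hf'c : Continuous f') (hfC : ∀ t, |f t| ≤ C) (hf'C : ∀ t, |f' t| ≤ C) (hu : ContDiff ℝ 1 u)
    (hu2 : Integrable (fun t => ‖u t‖ ^ 2)) (hdu : Integrable (fun t => ‖deriv u t‖ ^ 2)) :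
    ∫ t, (f' t - f t ^ 2) * ‖u t‖ ^ 2 ≤ ∫ t, ‖deriv u t‖ ^ 2 := by
  have hfm := (continuous_iff_continuousAt.2 fun t => (hf t).continuousAt).aestronglyMeasurable
    (μ := volume)
  have hum := hu.continuous.aestronglyMeasurable (μ := volume)
  have hdum := (hu.continuous_deriv le_rfl).aestronglyMeasurable (μ := volume)
  have hfu1 : Integrable (fun t => f t * ‖u t‖ ^ 2) := hu2.bdd_mul hfm (ae_of_all _ hfC)
  have hfu : Integrable (fun t => f t ^ 2 * ‖u t‖ ^ 2) := by
    simpa only [pow_two (f _), mul_assoc] using hfu1.bdd_mul hfm (ae_of_all _ hfC)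
  have hf'u : Integrable (fun t => f' t * ‖u t‖ ^ 2) :=
    hu2.bdd_mul hf'c.aestronglyMeasurable (ae_of_all _ hf'C)
  have hzero := integral_eq_zero_of_hasDerivAt_of_integrable (hasDerivAt_mul_norm_sq hf hu)
    (hf'u.add (integrable_mul_inner hfm hum hdum hfu hdu)) hfu1
  have hsquare := integral_norm_add_smul_sq hfm hum hdum hfu hf'u hdu
  have hnonneg : 0 ≤ ∫ t, ‖deriv u t + f t • u t‖ ^ 2 := integral_nonneg fun t => by positivity
  linarith

end RiccatiIdentity

section DeGennes

variable {ξ : ℝ} {u : ℝ → ℂ}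

/-- The squared `L²` norm on the half line `t > 0`. -/
def halfLineNormSq (u : ℝ → ℂ) : ℝ := ∫ t in Ioi (0 : ℝ), ‖u t‖ ^ 2

/-- The quadratic form of the de Gennes operator `-d²/dt² + (t + ξ)²` on the half line, whose
lowest Rayleigh quotient is `deGennes ξ`. -/
def deGennesForm (ξ : ℝ) (u : ℝ → ℂ) : ℝ :=
  ∫ t in Ioi (0 : ℝ), (‖deriv u t‖ ^ 2 + (t + ξ) ^ 2 * ‖u t‖ ^ 2)

/-- The trial functions admitted in the definition of `deGennes`: `C¹` functions with finite
`halfLineNormSq` and finite `deGennesForm`. -/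
structure InDeGennesDomain (ξ : ℝ) (u : ℝ → ℂ) : Prop where
  contDiff : ContDiff ℝ 1 u
  integrableOn_norm_sq : IntegrableOn (fun t => ‖u t‖ ^ 2) (Ioi 0)
  integrableOn_form :
    IntegrableOn (fun t => ‖deriv u t‖ ^ 2 + (t + ξ) ^ 2 * ‖u t‖ ^ 2) (Ioi 0)

lemma halfLineNormSq_nonneg (u : ℝ → ℂ) : 0 ≤ halfLineNormSq u :=
  integral_nonneg fun t => sq_nonneg ‖u t‖

lemma deGennesForm_nonneg (ξ : ℝ) (u : ℝ → ℂ) : 0 ≤ deGennesForm ξ u :=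
  integral_nonneg fun t => by positivity

lemma deGennes_nonneg (ξ : ℝ) : 0 ≤ deGennes ξ := by
  refine Real.sInf_nonneg ?_
  rintro _ ⟨u, -, -, -, hpos, rfl⟩
  exact div_nonneg (deGennesForm_nonneg ξ u) hpos.le

lemma deGennes_mul_le_deGennesForm (hu : InDeGennesDomain ξ u) :
    deGennes ξ * halfLineNormSq u ≤ deGennesForm ξ u := by
  rcases (halfLineNormSq_nonneg u).eq_or_lt with hzero | hpos
  · rw [← hzero, mul_zero]
    exact deGennesForm_nonneg ξ u
  · rw [← le_div_iff₀ hpos]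
    refine csInf_le ⟨0, ?_⟩
      ⟨u, hu.contDiff, hu.integrableOn_norm_sq, hu.integrableOn_form, hpos, rfl⟩
    rintro _ ⟨v, -, -, -, hv, rfl⟩
    exact div_nonneg (deGennesForm_nonneg ξ v) hv.le

lemma Theta0_le_deGennes (ξ : ℝ) : Theta0 ≤ deGennes ξ :=
  ciInf_le ⟨0, by rintro _ ⟨η, rfl⟩; exact deGennes_nonneg η⟩ ξ

namespace InDeGennesDomain

lemma integrableOn_deriv_norm_sq (hu : InDeGennesDomain ξ u) :
    IntegrableOn (fun t => ‖deriv u t‖ ^ 2) (Ioi 0) := by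
  have hdu := hu.contDiff.continuous_deriv le_rfl
  refine hu.integrableOn_form.mono' (by fun_prop) (ae_of_all _ fun t => ?_)
  rw [norm_of_nonneg (by positivity)]
  exact le_add_of_nonneg_right (by positivity)

lemma integrableOn_potential (hu : InDeGennesDomain ξ u) :
    IntegrableOn (fun t => (t + ξ) ^ 2 * ‖u t‖ ^ 2) (Ioi 0) := by
  have huc := hu.contDiff.continuous
  refine hu.integrableOn_form.mono' (by fun_prop) (ae_of_all _ fun t => ?_)
  rw [norm_of_nonneg (by positivity)]
  exact le_add_of_nonneg_left (by positivity)

lemma integrableOn_mul_norm_sq {w : ℝ → ℝ} {C : ℝ} (hu : InDeGennesDomain ξ u)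
    (hw : Continuous w) (hwC : ∀ y, |w y| ≤ C * (1 + y ^ 2)) :
    IntegrableOn (fun t => w (t + ξ) * ‖u t‖ ^ 2) (Ioi 0) := by
  have huc := hu.contDiff.continuous
  refine ((hu.integrableOn_norm_sq.add hu.integrableOn_potential).const_mul C).mono'
    (by fun_prop) (ae_of_all _ fun t => ?_)
  rw [norm_mul, norm_eq_abs, norm_of_nonneg (sq_nonneg ‖u t‖)]
  refine (mul_le_mul_of_nonneg_right (hwC (t + ξ)) (sq_nonneg ‖u t‖)).trans_eq ?_
  simp only [Pi.add_apply]
  ring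

lemma deGennesForm_eq {f f' : ℝ → ℝ} {C : ℝ} (hu : InDeGennesDomain ξ u)
    (hf : ∀ y, HasDerivAt f (f' y) y) (hf'c : Continuous f')
    (hfC : ∀ y, f y ^ 2 ≤ C * (1 + y ^ 2)) (hf'C : ∀ y, |f' y| ≤ C * (1 + y ^ 2)) :
    deGennesForm ξ u = (∫ t in Ioi (0 : ℝ), ‖deriv u t + f (t + ξ) • u t‖ ^ 2) +
      (∫ t in Ioi (0 : ℝ), (f' (t + ξ) - f (t + ξ) ^ 2 + (t + ξ) ^ 2) * ‖u t‖ ^ 2) +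
        f ξ * ‖u 0‖ ^ 2 := by
  have hfc : Continuous f := continuous_iff_continuousAt.2 fun y => (hf y).continuousAt
  have hf2 := hu.integrableOn_mul_norm_sq (w := fun y => f y ^ 2) (hfc.pow 2) fun y =>
    (abs_sq (f y)).trans_le (hfC y)
  have hf' := hu.integrableOn_mul_norm_sq hf'c hf'C
  have hsub : IntegrableOn (fun t => (f' (t + ξ) - f (t + ξ) ^ 2) * ‖u t‖ ^ 2) (Ioi 0) := by
    simpa only [IntegrableOn, sub_mul] using hf'.sub' hf2
  simp only [add_mul (f' _ - _)]
  rw [integral_Ioi_norm_deriv_add_smul_sq 0 (fun t => (hf (t + ξ)).comp_add_const t ξ)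
      hu.contDiff hu.integrableOn_norm_sq hu.integrableOn_deriv_norm_sq hf2 hf',
    integral_add hsub hu.integrableOn_potential, deGennesForm,
    integral_add hu.integrableOn_deriv_norm_sq hu.integrableOn_potential, zero_add]
  ring

end InDeGennesDomain

end DeGennes

/-- A pair consisting of a positive solution `φ` of `-φ″ + y² φ = l φ` and `F = -φ′ / φ`, which
turns that equation into a Riccati equation. The bounds on `F` single out the solution decaying
at `+∞`. -/
structure IsWeberPair (l : ℝ) (F φ : ℝ → ℝ) : Prop where
  hasDerivAt_riccati : ∀ y, HasDerivAt F (F y ^ 2 + l - y ^ 2) y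
  hasDerivAt_solution : ∀ y, HasDerivAt φ (-F y * φ y) y
  pos : ∀ y, 0 < φ y
  self_le : ∀ y, y ≤ F y
  sq_le : ∀ y, F y ^ 2 ≤ y ^ 2 + (1 - l)

lemma hasDerivAt_sq_div_two (y : ℝ) : HasDerivAt (fun y : ℝ => y ^ 2 / 2) y y := by
  simpa using (hasDerivAt_pow 2 y).div_const 2

lemma hasDerivAt_exp_neg_sq_div_two (y : ℝ) :
    HasDerivAt (fun y : ℝ => exp (-(y ^ 2 / 2))) (-y * exp (-(y ^ 2 / 2))) y := by
  simpa only [mul_comm] using (hasDerivAt_sq_div_two y).fun_neg.exp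

lemma isWeberPair_gaussian : IsWeberPair 1 id fun y => exp (-(y ^ 2 / 2)) where
  hasDerivAt_riccati y := by simpa using hasDerivAt_id y
  hasDerivAt_solution := hasDerivAt_exp_neg_sq_div_two
  pos _ := exp_pos _
  self_le _ := le_rfl
  sq_le y := by simp

section WeberIntegral

variable {γ : ℝ}

/-- The integral `∫₀^∞ r^γ e^(-r² - 2ry) dr`, which for `γ = -(1 + l) / 2` represents
`e^(y²/2) φ(y)` with `φ` the recessive solution of `-φ″ + y² φ = l φ`. -/
def weberIntegral (γ y : ℝ) : ℝ := ∫ r in Ioi (0 : ℝ), r ^ γ * exp (-r ^ 2 - 2 * r * y)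

lemma integrableOn_rpow_mul_exp_neg_half_sq (hγ : -1 < γ) :
    IntegrableOn (fun r : ℝ => r ^ γ * exp (-(1 / 2) * r ^ 2)) (Ioi 0) :=
  integrableOn_rpow_mul_exp_neg_mul_sq (by norm_num) hγ

lemma rpow_mul_exp_le_of_neg_le (γ : ℝ) {A r y : ℝ} (hr : 0 ≤ r) (hy : -A ≤ y) :
    r ^ γ * exp (-r ^ 2 - 2 * r * y) ≤ r ^ γ * exp (-(1 / 2) * r ^ 2) * exp (2 * A ^ 2) := by
  rw [mul_assoc (r ^ γ), ← Real.exp_add]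
  gcongr
  nlinarith [sq_nonneg (r - 2 * A), mul_le_mul_of_nonneg_left hy hr]

lemma integrableOn_rpow_mul_exp (hγ : -1 < γ) (y : ℝ) :
    IntegrableOn (fun r : ℝ => r ^ γ * exp (-r ^ 2 - 2 * r * y)) (Ioi 0) := by
  refine ((integrableOn_rpow_mul_exp_neg_half_sq hγ).mul_const (exp (2 * (-y) ^ 2))).mono'
    (by fun_prop) ?_
  filter_upwards [self_mem_ae_restrict measurableSet_Ioi] with r hr
  rw [mem_Ioi] at hr
  rw [norm_of_nonneg (by positivity)]
  exact rpow_mul_exp_le_of_neg_le γ hr.le (neg_neg y).le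

lemma weberIntegral_pos (hγ : -1 < γ) (y : ℝ) : 0 < weberIntegral γ y := by
  have hpos : ∀ r ∈ Ioi (0 : ℝ), 0 < r ^ γ * exp (-r ^ 2 - 2 * r * y) := fun r hr =>
    mul_pos (rpow_pos_of_pos hr γ) (exp_pos _)
  have hsub : Ioi (0 : ℝ) ⊆ Function.support fun r => r ^ γ * exp (-r ^ 2 - 2 * r * y) :=
    fun r hr => (hpos r hr).ne'
  rw [weberIntegral, setIntegral_pos_iff_support_of_nonneg_ae
    ((ae_restrict_mem measurableSet_Ioi).mono fun r hr => (hpos r hr).le)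
    (integrableOn_rpow_mul_exp hγ y),
    inter_eq_self_of_subset_right hsub]
  simp

lemma hasDerivAt_weberIntegral (hγ : -1 < γ) (y : ℝ) :
    HasDerivAt (weberIntegral γ) (-2 * weberIntegral (γ + 1) y) y := by
  have hderiv : ∀ r ∈ Ioi (0 : ℝ), ∀ z, HasDerivAt (fun z => r ^ γ * exp (-r ^ 2 - 2 * r * z))
      (-2 * (r ^ (γ + 1) * exp (-r ^ 2 - 2 * r * z))) z := fun r hr z => by
    have hexponent : HasDerivAt (fun z : ℝ => -r ^ 2 - 2 * r * z) (-(2 * r)) z := by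
      simpa using ((hasDerivAt_id z).const_mul (2 * r)).const_sub (-r ^ 2)
    refine (hexponent.exp.const_mul (r ^ γ)).congr_deriv ?_
    rw [rpow_add hr, rpow_one]
    ring
  have hbound : ∀ r ∈ Ioi (0 : ℝ), ∀ z ∈ Metric.ball y 1,
      ‖-2 * (r ^ (γ + 1) * exp (-r ^ 2 - 2 * r * z))‖ ≤
        2 * (r ^ (γ + 1) * exp (-(1 / 2) * r ^ 2) * exp (2 * (1 - y) ^ 2)) := fun r hr z hz => by
    rw [mem_Ioi] at hr
    rw [Metric.mem_ball, Real.dist_eq, abs_lt] at hz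
    rw [norm_mul, norm_neg, norm_ofNat, norm_of_nonneg (by positivity)]
    exact mul_le_mul_of_nonneg_left
      (rpow_mul_exp_le_of_neg_le (γ + 1) hr.le (by linarith [hz.1])) two_pos.le
  have hγ' : -1 < γ + 1 := by linarith
  have hparam := (hasDerivAt_integral_of_dominated_loc_of_deriv_le
    (μ := volume.restrict (Ioi 0)) (F := fun z r => r ^ γ * exp (-r ^ 2 - 2 * r * z))
    (F' := fun z r => -2 * (r ^ (γ + 1) * exp (-r ^ 2 - 2 * r * z)))
    (bound := fun r => 2 * (r ^ (γ + 1) * exp (-(1 / 2) * r ^ 2) * exp (2 * (1 - y) ^ 2)))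
    (Metric.ball_mem_nhds y one_pos) (Eventually.of_forall fun z => by fun_prop)
    (integrableOn_rpow_mul_exp hγ y) (by fun_prop)
    ((ae_restrict_mem measurableSet_Ioi).mono hbound)
    (((integrableOn_rpow_mul_exp_neg_half_sq hγ').mul_const _).const_mul 2)
    ((ae_restrict_mem measurableSet_Ioi).mono fun r hr z _ => hderiv r hr z)).2
  rwa [integral_const_mul] at hparam

lemma weberIntegral_add_two (hγ : -1 < γ) (y : ℝ) :
    2 * weberIntegral (γ + 2) y =
      (γ + 1) * weberIntegral γ y - 2 * y * weberIntegral (γ + 1) y := by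
  have hint₀ := (integrableOn_rpow_mul_exp hγ y).const_mul (γ + 1)
  have hint₁ := integrableOn_rpow_mul_exp (by linarith : -1 < γ + 1) y
  have hint₂ := (integrableOn_rpow_mul_exp (by linarith : -1 < γ + 2) y).const_mul 2
  have hderiv : ∀ r ∈ Ioi (0 : ℝ), HasDerivAt
      (fun r : ℝ => r ^ (γ + 1) * exp (-r ^ 2 - 2 * r * y))
      ((γ + 1) * (r ^ γ * exp (-r ^ 2 - 2 * r * y))
        - 2 * (r ^ (γ + 2) * exp (-r ^ 2 - 2 * r * y))
        - 2 * y * (r ^ (γ + 1) * exp (-r ^ 2 - 2 * r * y))) r := fun r hr => by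
    have hexponent : HasDerivAt (fun r : ℝ => -r ^ 2 - 2 * r * y) (-(2 * r) - 2 * y) r := by
      simpa using (hasDerivAt_pow 2 r).fun_neg.fun_sub (((hasDerivAt_id r).const_mul 2).mul_const y)
    refine ((hasDerivAt_rpow_const (Or.inl hr.ne')).mul hexponent.exp).congr_deriv ?_
    rw [add_sub_cancel_right, rpow_add hr, rpow_add hr, rpow_one, rpow_two]
    ring
  have hint := (hint₀.sub' hint₂).sub' (hint₁.const_mul (2 * y))
  have hcont : ContinuousWithinAt (fun r : ℝ => r ^ (γ + 1) * exp (-r ^ 2 - 2 * r * y))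
      (Ici 0) 0 :=
    ((continuousAt_rpow_const _ _ (Or.inr (by linarith))).mul
      (by fun_prop)).continuousWithinAt
  have hftc := integral_Ioi_of_hasDerivAt_of_tendsto hcont hderiv hint
    (tendsto_zero_of_hasDerivAt_of_integrableOn_Ioi hderiv hint hint₁)
  rw [integral_sub (hint₀.sub' hint₂) (hint₁.const_mul (2 * y)), integral_sub hint₀ hint₂,
    integral_const_mul, integral_const_mul, integral_const_mul, zero_rpow (by linarith),
    zero_mul, sub_zero] at hftc
  unfold weberIntegral
  linarith

lemma weberIntegral_add_one_sq_le (hγ : -1 < γ) (y : ℝ) :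
    weberIntegral (γ + 1) y ^ 2 ≤ weberIntegral γ y * weberIntegral (γ + 2) y := by
  have hint₀ := integrableOn_rpow_mul_exp hγ y
  have hint₁ := integrableOn_rpow_mul_exp (by linarith : -1 < γ + 1) y
  have hint₂ := integrableOn_rpow_mul_exp (by linarith : -1 < γ + 2) y
  have hquad : ∀ c : ℝ, 0 ≤ weberIntegral γ y * (c * c) + -2 * weberIntegral (γ + 1) y * c
      + weberIntegral (γ + 2) y := fun c => by
    have hnonneg : 0 ≤ ∫ r in Ioi (0 : ℝ), (r - c) ^ 2 * (r ^ γ * exp (-r ^ 2 - 2 * r * y)) :=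
      setIntegral_nonneg measurableSet_Ioi fun r hr => by
        have := rpow_nonneg (mem_Ioi.1 hr).le γ
        positivity
    have hexpand : ∀ r ∈ Ioi (0 : ℝ), (r - c) ^ 2 * (r ^ γ * exp (-r ^ 2 - 2 * r * y)) =
        c * c * (r ^ γ * exp (-r ^ 2 - 2 * r * y))
          + -2 * c * (r ^ (γ + 1) * exp (-r ^ 2 - 2 * r * y))
          + r ^ (γ + 2) * exp (-r ^ 2 - 2 * r * y) := fun r hr => by
      rw [rpow_add hr, rpow_add hr, rpow_one, rpow_two]
      ring
    rw [setIntegral_congr_fun measurableSet_Ioi hexpand,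
      integral_add ((hint₀.const_mul _).fun_add (hint₁.const_mul _)) hint₂,
      integral_add (hint₀.const_mul _) (hint₁.const_mul _), integral_const_mul,
      integral_const_mul] at hnonneg
    unfold weberIntegral
    linarith
  have hdiscrim := discrim_le_zero hquad
  rw [discrim] at hdiscrim
  linarith

lemma exists_isWeberPair {l : ℝ} (hl : l < 1) : ∃ F φ : ℝ → ℝ, IsWeberPair l F φ := by
  obtain ⟨γ, rfl⟩ : ∃ γ : ℝ, l = -1 - 2 * γ := ⟨-(1 + l) / 2, by ring⟩
  have hγ : -1 < γ := by linarith
  have hγ' : -1 < γ + 1 := by linarith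
  have hJ := weberIntegral_pos hγ
  refine ⟨fun y => y + 2 * (weberIntegral (γ + 1) y / weberIntegral γ y),
    fun y => exp (-(y ^ 2 / 2)) * weberIntegral γ y, fun y => ?_, fun y => ?_,
    fun y => mul_pos (exp_pos _) (hJ y), fun y => ?_, fun y => ?_⟩
  · have hrec := weberIntegral_add_two hγ y
    have hJy := (hJ y).ne'
    refine ((hasDerivAt_id y).add (((hasDerivAt_weberIntegral hγ' y).div
      (hasDerivAt_weberIntegral hγ y) hJy).const_mul 2)).congr_deriv ?_
    rw [show γ + 1 + 1 = γ + 2 by ring]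
    field_simp
    linear_combination (-2 * weberIntegral γ y) * hrec
  · have hJy := (hJ y).ne'
    refine ((hasDerivAt_exp_neg_sq_div_two y).mul (hasDerivAt_weberIntegral hγ y)).congr_deriv ?_
    field_simp
    ring
  · have := div_pos (weberIntegral_pos hγ' y) (hJ y)
    linarith
  · have hratio : (weberIntegral (γ + 1) y / weberIntegral γ y) ^ 2 ≤
        weberIntegral (γ + 2) y / weberIntegral γ y := by
      rw [div_pow, div_le_div_iff₀ (pow_pos (hJ y) 2) (hJ y)]
      nlinarith [weberIntegral_add_one_sq_le hγ y, hJ y]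
    have hrec : 2 * (weberIntegral (γ + 2) y / weberIntegral γ y) =
        γ + 1 - 2 * y * (weberIntegral (γ + 1) y / weberIntegral γ y) := by
      have hJy := (hJ y).ne'
      field_simp
      linear_combination weberIntegral_add_two hγ y
    nlinarith

end WeberIntegral

lemma halfLineNormSq_pos {u : ℝ → ℂ} (hu : IntegrableOn (fun t => ‖u t‖ ^ 2) (Ioi 0))
    (hne : ∀ t, u t ≠ 0) : 0 < halfLineNormSq u := by
  have hsupport : Function.support (fun t => ‖u t‖ ^ 2) = univ :=
    eq_univ_of_forall fun t => pow_ne_zero 2 (norm_ne_zero_iff.2 (hne t))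
  rw [halfLineNormSq,
    setIntegral_pos_iff_support_of_nonneg_ae (ae_of_all _ fun t => sq_nonneg ‖u t‖) hu, hsupport]
  simp

/-- The function `t ↦ φ (t + ξ)` as a complex-valued trial function for `deGennes ξ`. -/
def shiftedTrial (φ : ℝ → ℝ) (ξ t : ℝ) : ℂ := (φ (t + ξ) : ℂ)

lemma norm_shiftedTrial_sq (φ : ℝ → ℝ) (ξ t : ℝ) : ‖shiftedTrial φ ξ t‖ ^ 2 = φ (t + ξ) ^ 2 := by
  rw [shiftedTrial, Complex.norm_real, norm_eq_abs, sq_abs]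

namespace IsWeberPair

variable {l ξ : ℝ} {F φ : ℝ → ℝ}

lemma continuous_riccati (h : IsWeberPair l F φ) : Continuous F :=
  continuous_iff_continuousAt.2 fun y => (h.hasDerivAt_riccati y).continuousAt

lemma continuous_solution (h : IsWeberPair l F φ) : Continuous φ :=
  continuous_iff_continuousAt.2 fun y => (h.hasDerivAt_solution y).continuousAt

lemma riccati_sq_le_mul (h : IsWeberPair l F φ) (y : ℝ) :
    F y ^ 2 ≤ (1 + |l|) * (1 + y ^ 2) := by
  nlinarith [h.sq_le y, neg_abs_le l, mul_nonneg (abs_nonneg l) (sq_nonneg y)]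

lemma abs_deriv_riccati_le (h : IsWeberPair l F φ) (y : ℝ) :
    |F y ^ 2 + l - y ^ 2| ≤ (1 + |l|) * (1 + y ^ 2) := by
  have hly := mul_nonneg (abs_nonneg l) (sq_nonneg y)
  rw [abs_le]
  constructor
  · nlinarith [sq_nonneg (F y), neg_abs_le l]
  · nlinarith [h.sq_le y, abs_nonneg l, sq_nonneg y]

lemma antitone_mul_exp (h : IsWeberPair l F φ) : Antitone fun y => φ y * exp (y ^ 2 / 2) := by
  have hderiv : ∀ y, HasDerivAt (fun y => φ y * exp (y ^ 2 / 2))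
      ((y - F y) * (φ y * exp (y ^ 2 / 2))) y := fun y => by
    refine ((h.hasDerivAt_solution y).mul (hasDerivAt_sq_div_two y).exp).congr_deriv ?_
    ring
  refine antitone_of_deriv_nonpos (fun y => (hderiv y).differentiableAt) fun y => ?_
  rw [(hderiv y).deriv]
  exact mul_nonpos_of_nonpos_of_nonneg (sub_nonpos.2 (h.self_le y))
    (mul_nonneg (h.pos y).le (exp_pos _).le)

lemma solution_sq_le (h : IsWeberPair l F φ) {y : ℝ} (hy : ξ ≤ y) :
    φ y ^ 2 ≤ (φ ξ * exp (ξ ^ 2 / 2)) ^ 2 * exp (-1 * y ^ 2) := by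
  have hsq := pow_le_pow_left₀ (mul_nonneg (h.pos y).le (exp_pos _).le) (h.antitone_mul_exp hy) 2
  calc φ y ^ 2 = (φ y * exp (y ^ 2 / 2)) ^ 2 * exp (-1 * y ^ 2) := by
        rw [mul_pow, ← Real.exp_nat_mul, mul_assoc, ← Real.exp_add]
        ring_nf
        rw [Real.exp_zero, mul_one]
    _ ≤ _ := mul_le_mul_of_nonneg_right hsq (exp_pos _).le

lemma integrableOn_mul_solution_sq {w : ℝ → ℝ} {C : ℝ} (h : IsWeberPair l F φ)
    (hw : Continuous w) (hwC : ∀ y, |w y| ≤ C * (1 + y ^ 2)) :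
    IntegrableOn (fun t => w (t + ξ) * φ (t + ξ) ^ 2) (Ioi 0) := by
  have hφc := h.continuous_solution
  have hgauss : Integrable fun y : ℝ => exp (-1 * y ^ 2) + y ^ 2 * exp (-1 * y ^ 2) := by
    refine (integrable_exp_neg_mul_sq one_pos).fun_add ?_
    simpa only [rpow_two] using
      integrable_rpow_mul_exp_neg_mul_sq one_pos (by norm_num : (-1 : ℝ) < 2)
  refine (((hgauss.comp_add_right ξ).const_mul
    (C * (φ ξ * exp (ξ ^ 2 / 2)) ^ 2)).integrableOn).mono' (by fun_prop) ?_
  filter_upwards [self_mem_ae_restrict measurableSet_Ioi] with t ht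
  rw [mem_Ioi] at ht
  rw [norm_mul, norm_eq_abs, norm_of_nonneg (sq_nonneg _)]
  calc |w (t + ξ)| * φ (t + ξ) ^ 2
      ≤ C * (1 + (t + ξ) ^ 2) * ((φ ξ * exp (ξ ^ 2 / 2)) ^ 2 * exp (-1 * (t + ξ) ^ 2)) :=
        mul_le_mul (hwC _) (h.solution_sq_le (by linarith)) (sq_nonneg _)
          ((abs_nonneg _).trans (hwC _))
    _ = _ := by ring

lemma hasDerivAt_shiftedTrial (h : IsWeberPair l F φ) (ξ t : ℝ) :
    HasDerivAt (shiftedTrial φ ξ) (-F (t + ξ) • shiftedTrial φ ξ t) t := by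
  refine ((h.hasDerivAt_solution (t + ξ)).comp_add_const t ξ).ofReal_comp.congr_deriv ?_
  rw [shiftedTrial, Complex.real_smul, ← Complex.ofReal_mul]

lemma inDeGennesDomain_shiftedTrial (h : IsWeberPair l F φ) (ξ : ℝ) :
    InDeGennesDomain ξ (shiftedTrial φ ξ) := by
  have hFc := h.continuous_riccati
  have hφc := h.continuous_solution
  have hderiv : deriv (shiftedTrial φ ξ) = fun t => -F (t + ξ) • shiftedTrial φ ξ t :=
    funext fun t => (h.hasDerivAt_shiftedTrial ξ t).deriv
  refine ⟨contDiff_one_iff_deriv.2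
    ⟨fun t => (h.hasDerivAt_shiftedTrial ξ t).differentiableAt, ?_⟩, ?_, ?_⟩
  · rw [hderiv]
    unfold shiftedTrial
    fun_prop
  · simp only [norm_shiftedTrial_sq]
    simpa only [one_mul] using h.integrableOn_mul_solution_sq (w := fun _ => 1) (C := 1)
      continuous_const fun y => by rw [abs_one]; nlinarith [sq_nonneg y]
  · simp only [hderiv, norm_smul, mul_pow, norm_neg, norm_eq_abs, sq_abs, norm_shiftedTrial_sq,
      ← add_mul]
    refine h.integrableOn_mul_solution_sq (w := fun y => F y ^ 2 + y ^ 2) (C := 2 + |l|)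
      (by fun_prop) fun y => ?_
    rw [abs_of_nonneg (by positivity)]
    nlinarith [h.riccati_sq_le_mul y]

lemma deGennesForm_shiftedTrial (h : IsWeberPair l F φ) (ξ : ℝ) :
    deGennesForm ξ (shiftedTrial φ ξ) =
      l * halfLineNormSq (shiftedTrial φ ξ) + F ξ * φ ξ ^ 2 := by
  have hFc := h.continuous_riccati
  have hsquare : ∀ t, deriv (shiftedTrial φ ξ) t + F (t + ξ) • shiftedTrial φ ξ t = 0 :=
    fun t => by rw [(h.hasDerivAt_shiftedTrial ξ t).deriv, neg_smul, neg_add_cancel]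
  have hriccati : ∀ y, F y ^ 2 + l - y ^ 2 - F y ^ 2 + y ^ 2 = l := fun y => by ring
  rw [(h.inDeGennesDomain_shiftedTrial ξ).deGennesForm_eq h.hasDerivAt_riccati (by fun_prop)
    h.riccati_sq_le_mul h.abs_deriv_riccati_le]
  simp only [hsquare, hriccati, norm_shiftedTrial_sq, integral_const_mul, zero_add]
  simp only [halfLineNormSq, norm_shiftedTrial_sq, norm_zero, zero_pow two_ne_zero,
    integral_zero, zero_add]

lemma halfLineNormSq_shiftedTrial_pos (h : IsWeberPair l F φ) (ξ : ℝ) :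
    0 < halfLineNormSq (shiftedTrial φ ξ) :=
  halfLineNormSq_pos (h.inDeGennesDomain_shiftedTrial ξ).integrableOn_norm_sq fun t =>
    Complex.ofReal_ne_zero.2 (h.pos (t + ξ)).ne'

lemma nonneg_of_le_deGennes (h : IsWeberPair l F φ) (hl : l ≤ deGennes ξ) : 0 ≤ F ξ := by
  have hupper := deGennes_mul_le_deGennesForm (h.inDeGennesDomain_shiftedTrial ξ)
  have hlower := mul_le_mul_of_nonneg_right hl (halfLineNormSq_nonneg (shiftedTrial φ ξ))
  rw [h.deGennesForm_shiftedTrial] at hupper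
  exact nonneg_of_mul_nonneg_left (by linarith) (pow_pos (h.pos ξ) 2)

end IsWeberPair

lemma Theta0_lt_one : Theta0 < 1 := by
  by_contra! hle
  have := isWeberPair_gaussian.nonneg_of_le_deGennes (hle.trans (Theta0_le_deGennes (-1)))
  norm_num at this

lemma le_deGennes {μ ξ : ℝ}
    (h : ∀ u, InDeGennesDomain ξ u → μ * halfLineNormSq u ≤ deGennesForm ξ u) :
    μ ≤ deGennes ξ := by
  have htrial := isWeberPair_gaussian.inDeGennesDomain_shiftedTrial ξ
  refine le_csInf ⟨_, _, htrial.contDiff, htrial.integrableOn_norm_sq, htrial.integrableOn_form,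
    isWeberPair_gaussian.halfLineNormSq_shiftedTrial_pos ξ, rfl⟩ ?_
  rintro _ ⟨u, hu, hu2, hform, hpos, rfl⟩
  exact (le_div_iff₀ hpos).2 (h u ⟨hu, hu2, hform⟩)

lemma le_deGennes_of_riccati {f f' : ℝ → ℝ} {C μ ξ : ℝ} (hf : ∀ y, HasDerivAt f (f' y) y)
    (hf'c : Continuous f') (hfC : ∀ y, f y ^ 2 ≤ C * (1 + y ^ 2))
    (hf'C : ∀ y, |f' y| ≤ C * (1 + y ^ 2)) (hξ : 0 ≤ f ξ)
    (hμ : ∀ y, ξ < y → μ ≤ f' y - f y ^ 2 + y ^ 2) : μ ≤ deGennes ξ := by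
  refine le_deGennes fun u hu => ?_
  have hfc : Continuous f := continuous_iff_continuousAt.2 fun y => (hf y).continuousAt
  have hint : IntegrableOn
      (fun t => (f' (t + ξ) - f (t + ξ) ^ 2 + (t + ξ) ^ 2) * ‖u t‖ ^ 2) (Ioi 0) := by
    refine hu.integrableOn_mul_norm_sq (w := fun y => f' y - f y ^ 2 + y ^ 2) (C := 2 * C + 1)
      (by fun_prop) fun y => ?_
    have := abs_le.1 (hf'C y)
    rw [abs_le]
    constructor <;> nlinarith [hfC y, sq_nonneg y, sq_nonneg (f y)]
  have hpotential : μ * halfLineNormSq u ≤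
      ∫ t in Ioi (0 : ℝ), (f' (t + ξ) - f (t + ξ) ^ 2 + (t + ξ) ^ 2) * ‖u t‖ ^ 2 := by
    rw [halfLineNormSq, ← integral_const_mul]
    refine setIntegral_mono_on (hu.integrableOn_norm_sq.const_mul μ) hint measurableSet_Ioi
      fun t ht => mul_le_mul_of_nonneg_right (hμ _ ?_) (sq_nonneg _)
    linarith [mem_Ioi.1 ht]
  have hsquare : 0 ≤ ∫ t in Ioi (0 : ℝ), ‖deriv u t + f (t + ξ) • u t‖ ^ 2 :=
    integral_nonneg fun t => sq_nonneg _
  have hboundary : 0 ≤ f ξ * ‖u 0‖ ^ 2 := mul_nonneg hξ (sq_nonneg _)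
  rw [hu.deGennesForm_eq hf hf'c hfC hf'C]
  linarith

lemma one_le_deGennes {ξ : ℝ} (hξ : 0 ≤ ξ) : 1 ≤ deGennes ξ :=
  le_deGennes_of_riccati (f := id) (C := 1) hasDerivAt_id continuous_const
    (fun y => by simp) (fun y => by rw [abs_one]; nlinarith [sq_nonneg y]) hξ fun y _ => by simp

lemma sq_le_deGennes {ξ : ℝ} (hξ : 0 ≤ ξ) : ξ ^ 2 ≤ deGennes ξ :=
  le_deGennes_of_riccati (f := fun _ => 0) (C := 1) (fun y => hasDerivAt_const y 0)
    continuous_const (fun y => by rw [zero_pow two_ne_zero]; positivity)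
    (fun y => by rw [abs_zero]; positivity) le_rfl
    fun y hy => by simpa using pow_le_pow_left₀ hξ hy.le 2

lemma neg_of_deGennes_eq_Theta0 {ξ : ℝ} (hξ : deGennes ξ = Theta0) : ξ < 0 := by
  by_contra! hle
  linarith [one_le_deGennes hle, Theta0_lt_one]

lemma two_sub_arctan_mem_Icc (y : ℝ) : 2 - arctan y ∈ Icc (2 / 5) 4 := by
  constructor <;> linarith [arctan_lt_pi_div_two y, neg_pi_div_two_lt_arctan y, pi_lt_d2]

lemma le_inv_add_mul_sub_mul_sq {L ε x y w : ℝ} (hx : 0 ≤ x) (hyx : y ≤ x) (hLy : -L ≤ y)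
    (hw : w ∈ Icc (2 / 5) 4) (hε : 16 * ε ≤ 1 / (2 * (2 + L ^ 2))) :
    1 / (2 * (2 + L ^ 2)) ≤ 1 / (1 + y ^ 2) + 2 * x * w - ε * w ^ 2 := by
  obtain ⟨hw, hw4⟩ := hw
  have hc : 1 / (2 * (2 + L ^ 2)) ≤ 1 / 4 :=
    one_div_le_one_div_of_le (by norm_num) (by nlinarith)
  have hc0 : 0 < 1 / (2 * (2 + L ^ 2)) := by positivity
  have hεw : ε * w ^ 2 ≤ 1 / (2 * (2 + L ^ 2)) := by
    have hw2 : w ^ 2 ≤ 16 := by nlinarith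
    nlinarith [mul_le_mul_of_nonneg_right hε (sq_nonneg w)]
  rcases le_total y 1 with hy | hy
  · have hinv : 2 * (1 / (2 * (2 + L ^ 2))) ≤ 1 / (1 + y ^ 2) := by
      have hy2 : y ^ 2 ≤ 1 + L ^ 2 := by
        rcases le_total y 0 with hy0 | hy0 <;> nlinarith
      rw [show 2 * (1 / (2 * (2 + L ^ 2))) = 1 / (2 + L ^ 2) by field_simp]
      exact one_div_le_one_div_of_le (by positivity) (by linarith)
    have : 0 ≤ 2 * x * w := by positivity
    linarith
  · have hxw : 4 / 5 ≤ 2 * x * w := by nlinarith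
    have : 0 ≤ 1 / (1 + y ^ 2) := by positivity
    linarith

namespace IsWeberPair

variable {l ξ : ℝ} {F φ : ℝ → ℝ}

lemma add_mul_le_deGennes (h : IsWeberPair l F φ) (hF : ∀ y, 0 ≤ F y) {L ε : ℝ} (hLξ : -L ≤ ξ)
    (hε : 0 ≤ ε) (hεF : 4 * ε ≤ F ξ) (hεL : 16 * ε ≤ 1 / (2 * (2 + L ^ 2))) :
    l + ε * (1 / (2 * (2 + L ^ 2))) ≤ deGennes ξ := by
  -- In the Riccati expression the perturbation `-ε w`, `w = 2 - arctan`, adds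
  -- `ε (1 / (1 + y²) + 2 F w - ε w²)`: the derivative of `arctan` pays on bounded sets, and
  -- `F y ≥ y` pays at `+∞`, where `w` is still bounded below.
  have hε1 : 4 * ε ≤ 1 := by
    have : 1 / (2 * (2 + L ^ 2)) ≤ 1 := (div_le_one₀ (by positivity)).2 (by nlinarith)
    linarith
  have hderiv : ∀ y, HasDerivAt (fun y => F y - ε * (2 - arctan y))
      (F y ^ 2 + l - y ^ 2 + ε * (1 / (1 + y ^ 2))) y := fun y =>
    ((h.hasDerivAt_riccati y).sub (((hasDerivAt_arctan y).const_sub 2).const_mul ε)).congr_deriv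
      (by ring)
  have hFc := h.continuous_riccati
  have hcont : Continuous fun y : ℝ => 1 / (1 + y ^ 2) :=
    continuous_const.div (by fun_prop) fun y => by positivity
  refine le_deGennes_of_riccati (C := 4 + 2 * |l|) hderiv (by fun_prop) (fun y => ?_)
    (fun y => ?_) ?_ fun y hy => ?_
  · obtain ⟨hw, hw4⟩ := two_sub_arctan_mem_Icc y
    have hεw : (ε * (2 - arctan y)) ^ 2 ≤ 1 := pow_le_one₀ (by positivity) (by nlinarith)
    nlinarith [h.riccati_sq_le_mul y, sq_nonneg (F y + ε * (2 - arctan y)), sq_nonneg y]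
  · have hinv : 1 / (1 + y ^ 2) ≤ 1 := (div_le_one₀ (by positivity)).2 (by nlinarith)
    have hinv0 : 0 ≤ 1 / (1 + y ^ 2) := by positivity
    refine (abs_add_le _ _).trans ?_
    rw [abs_of_nonneg (mul_nonneg hε hinv0)]
    nlinarith [h.abs_deriv_riccati_le y, mul_nonneg (abs_nonneg l) (sq_nonneg y), abs_nonneg l]
  · nlinarith [(two_sub_arctan_mem_Icc ξ).2]
  · have hgain := mul_le_mul_of_nonneg_left (le_inv_add_mul_sub_mul_sq (hF y) (h.self_le y)
      (hLξ.trans hy.le) (two_sub_arctan_mem_Icc y) hεL) hε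
    linarith

lemma exists_add_mul_le_deGennes (h : IsWeberPair l F φ) (hF : ∀ y, 0 ≤ F y) (L : ℝ) :
    ∃ k > 0, ∀ ξ, -L ≤ ξ → l + k * min 1 (F ξ) ≤ deGennes ξ := by
  set c := 1 / (2 * (2 + L ^ 2))
  have hc0 : 0 < c := by positivity
  have hc1 : c ≤ 1 := (div_le_one₀ (by positivity)).2 (by nlinarith)
  refine ⟨c / 16 * c, by positivity, fun ξ hξ => ?_⟩
  have hmin0 : 0 ≤ min 1 (F ξ) := le_min zero_le_one (hF ξ)
  have hgrowth := h.add_mul_le_deGennes hF (ε := c / 16 * min 1 (F ξ)) hξ (by positivity)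
    (by nlinarith [min_le_right 1 (F ξ)]) (by nlinarith [min_le_left 1 (F ξ)])
  linarith

lemma eq_zero_of_deGennes_eq (h : IsWeberPair l F φ) (hF : ∀ y, 0 ≤ F y)
    (hξ : deGennes ξ = l) : F ξ = 0 := by
  obtain ⟨k, hk, hgrowth⟩ := h.exists_add_mul_le_deGennes hF (-ξ)
  refine (hF ξ).antisymm' (not_lt.1 fun hpos => ?_)
  have := mul_pos hk (lt_min one_pos hpos)
  linarith [hgrowth ξ (neg_neg ξ).le]

lemma eq_sq_of_eq_zero (h : IsWeberPair l F φ) (hF : ∀ y, 0 ≤ F y) (hξ : F ξ = 0) :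
    l = ξ ^ 2 := by
  have hmin : IsLocalMin F ξ := Eventually.of_forall fun y => hξ.trans_le (hF y)
  have := hmin.hasDerivAt_eq_zero (h.hasDerivAt_riccati ξ)
  rw [hξ] at this
  linarith

lemma le_riccati_add {s : ℝ} (h : IsWeberPair (ξ ^ 2) F φ) (hξ : F ξ = 0) (hs : 0 ≤ s) :
    -ξ * s ^ 2 - s ^ 3 / 3 ≤ F (ξ + s) := by
  have hderiv : ∀ s, HasDerivAt (fun s => F (ξ + s) - (-ξ * s ^ 2 - s ^ 3 / 3))
      (F (ξ + s) ^ 2) s := fun s => by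
    refine (((h.hasDerivAt_riccati (ξ + s)).comp_const_add ξ s).fun_sub
      (((hasDerivAt_pow 2 s).const_mul (-ξ)).fun_sub
        ((hasDerivAt_pow 3 s).div_const 3))).congr_deriv ?_
    push_cast
    ring
  have hmono : Monotone fun s => F (ξ + s) - (-ξ * s ^ 2 - s ^ 3 / 3) :=
    monotone_of_deriv_nonneg (fun s => (hderiv s).differentiableAt) fun s => by
      rw [(hderiv s).deriv]
      positivity
  have := hmono hs
  simp only [add_zero, hξ] at this
  linarith

lemma mul_sq_le_min_riccati {s : ℝ} (h : IsWeberPair (ξ ^ 2) F φ) (hF : F ξ = 0)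
    (hξ : ξ ∈ Ioo (-1) 0) (hs : s ∈ Icc 0 4) : -ξ / 16 * s ^ 2 ≤ min 1 (F (ξ + s)) := by
  obtain ⟨hξ1, hξ0⟩ := hξ
  obtain ⟨hs0, hs4⟩ := hs
  have hs2 : s ^ 2 ≤ 16 := by nlinarith
  refine le_min (by nlinarith) ?_
  rcases le_total s (-2 * ξ) with hnear | hfar
  · refine le_trans ?_ (h.le_riccati_add hF hs0)
    nlinarith [mul_nonneg (sq_nonneg s) (by linarith : 0 ≤ -2 * ξ - s),
      mul_nonneg (sq_nonneg s) (by linarith : 0 ≤ -ξ)]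
  · refine le_trans ?_ (h.self_le _)
    nlinarith [mul_nonneg hs0 (by linarith : 0 ≤ 4 - s)]

end IsWeberPair

lemma exists_quadratic_le_deGennes {ξ₀ : ℝ} (hξ₀ : deGennes ξ₀ = Theta0) :
    ∃ c > 0, ∀ ξ, Theta0 + c * max (ξ - ξ₀) 0 ^ 2 ≤ deGennes ξ := by
  obtain ⟨F, φ, h⟩ := exists_isWeberPair Theta0_lt_one
  have hF : ∀ y, 0 ≤ F y := fun y => h.nonneg_of_le_deGennes (Theta0_le_deGennes y)
  have hFξ₀ := h.eq_zero_of_deGennes_eq hF hξ₀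
  have hTheta0 := h.eq_sq_of_eq_zero hF hFξ₀
  have hneg := neg_of_deGennes_eq_Theta0 hξ₀
  have hmem : ξ₀ ∈ Ioo (-1) 0 := ⟨by nlinarith [Theta0_lt_one], hneg⟩
  obtain ⟨k, hk, hgrowth⟩ := h.exists_add_mul_le_deGennes hF (-ξ₀)
  rw [hTheta0] at h hgrowth ⊢
  refine ⟨min (k * (-ξ₀ / 16)) (1 / 2), lt_min (by nlinarith) (by norm_num), fun ξ => ?_⟩
  rcases le_total ξ ξ₀ with hle | hle
  · rw [max_eq_right (sub_nonpos.2 hle), zero_pow two_ne_zero, mul_zero, add_zero, ← hTheta0]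
    exact Theta0_le_deGennes ξ
  rw [max_eq_left (sub_nonneg.2 hle)]
  rcases le_total (ξ - ξ₀) 4 with hnear | hfar
  · have hlower := h.mul_sq_le_min_riccati hFξ₀ hmem ⟨sub_nonneg.2 hle, hnear⟩
    rw [add_sub_cancel] at hlower
    calc ξ₀ ^ 2 + min (k * (-ξ₀ / 16)) (1 / 2) * (ξ - ξ₀) ^ 2
        ≤ ξ₀ ^ 2 + k * (-ξ₀ / 16) * (ξ - ξ₀) ^ 2 := by gcongr; exact min_le_left _ _
      _ = ξ₀ ^ 2 + k * (-ξ₀ / 16 * (ξ - ξ₀) ^ 2) := by ring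
      _ ≤ ξ₀ ^ 2 + k * min 1 (F ξ) := by gcongr
      _ ≤ deGennes ξ := hgrowth ξ (by rwa [neg_neg])
  · calc ξ₀ ^ 2 + min (k * (-ξ₀ / 16)) (1 / 2) * (ξ - ξ₀) ^ 2
        ≤ ξ₀ ^ 2 + 1 / 2 * (ξ - ξ₀) ^ 2 := by gcongr; exact min_le_right _ _
      _ ≤ ξ ^ 2 := by nlinarith [hmem.1]
      _ ≤ deGennes ξ := sq_le_deGennes (by linarith [hmem.1])

section HalfPlane

variable {ψ : ℝ × ℝ → ℂ}

lemma restrict_halfPlane : (volume : Measure (ℝ × ℝ)).restrict halfPlane =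
    (volume.restrict (Ioi (0 : ℝ))).prod volume := by
  rw [halfPlane, Measure.volume_eq_prod, ← Measure.prod_restrict, Measure.restrict_univ]

lemma deriv_slice_fst (hψ : ContDiff ℝ 1 ψ) (ρ t : ℝ) :
    deriv (fun t => ψ (t, ρ)) t = fderiv ℝ ψ (t, ρ) (1, 0) :=
  ((hψ.differentiable one_ne_zero (t, ρ)).hasFDerivAt.comp_hasDerivAt t
    ((hasDerivAt_id t).prodMk (hasDerivAt_const t ρ))).deriv

lemma deriv_slice_snd (hψ : ContDiff ℝ 1 ψ) (t ρ : ℝ) :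
    deriv (fun ρ => ψ (t, ρ)) ρ = fderiv ℝ ψ (t, ρ) (0, 1) :=
  ((hψ.differentiable one_ne_zero (t, ρ)).hasFDerivAt.comp_hasDerivAt ρ
    ((hasDerivAt_const ρ t).prodMk (hasDerivAt_id ρ))).deriv

lemma integral_mul_norm_sq_le_of_le_deGennes {κ w : ℝ → ℝ} (hψ : ContDiff ℝ 1 ψ)
    (hψ2 : IntegrableOn (fun p => ‖ψ p‖ ^ 2) halfPlane)
    (hform : IntegrableOn
      (fun p => ‖fderiv ℝ ψ p (1, 0)‖ ^ 2 + (p.1 + κ p.2) ^ 2 * ‖ψ p‖ ^ 2) halfPlane)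
    (hwψ : IntegrableOn (fun p => w p.2 * ‖ψ p‖ ^ 2) halfPlane)
    (hw : ∀ ρ, w ρ ≤ deGennes (κ ρ)) :
    ∫ p in halfPlane, w p.2 * ‖ψ p‖ ^ 2 ≤
      ∫ p in halfPlane, (‖fderiv ℝ ψ p (1, 0)‖ ^ 2 + (p.1 + κ p.2) ^ 2 * ‖ψ p‖ ^ 2) := by
  rw [IntegrableOn, restrict_halfPlane] at hψ2 hform hwψ
  rw [restrict_halfPlane, integral_prod_symm _ hwψ, integral_prod_symm _ hform]
  refine integral_mono_ae hwψ.integral_prod_right hform.integral_prod_right ?_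
  filter_upwards [hψ2.prod_left_ae, hform.prod_left_ae] with ρ hψρ hformρ
  have hdom : InDeGennesDomain (κ ρ) fun t => ψ (t, ρ) :=
    ⟨hψ.comp (contDiff_id.prodMk contDiff_const), hψρ, by
      simpa only [IntegrableOn, deriv_slice_fst hψ] using hformρ⟩
  simp only [integral_const_mul, ← deriv_slice_fst hψ]
  exact (mul_le_mul_of_nonneg_right (hw ρ) (halfLineNormSq_nonneg _)).trans
    (deGennes_mul_le_deGennesForm hdom)

lemma integrableOn_mul_norm_sq_of_bounded {w : ℝ → ℝ} {C : ℝ} (hw : Measurable w)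
    (hwC : ∀ ρ, |w ρ| ≤ C) (hψ2 : IntegrableOn (fun p => ‖ψ p‖ ^ 2) halfPlane) :
    IntegrableOn (fun p => w p.2 * ‖ψ p‖ ^ 2) halfPlane :=
  hψ2.bdd_mul (hw.comp measurable_snd).aestronglyMeasurable (ae_of_all _ fun p => hwC p.2)

lemma measurable_riccati {g g' : ℝ → ℝ} (hg : ∀ ρ, HasDerivAt g (g' ρ) ρ) (hg'c : Continuous g') :
    Measurable fun ρ => g' ρ - g ρ ^ 2 :=
  (hg'c.sub ((continuous_iff_continuousAt.2 fun ρ => (hg ρ).continuousAt).pow 2)).measurable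

lemma abs_sub_sq_le {a b C : ℝ} (ha : |a| ≤ C) (hb : |b| ≤ C) : |a - b ^ 2| ≤ C + C ^ 2 := by
  refine (abs_sub _ _).trans (add_le_add ha ?_)
  rw [abs_sq, ← sq_abs]
  exact pow_le_pow_left₀ (abs_nonneg b) hb 2

lemma integral_riccati_mul_norm_sq_le_tangential {g g' : ℝ → ℝ} {C : ℝ}
    (hg : ∀ ρ, HasDerivAt g (g' ρ) ρ) (hg'c : Continuous g') (hgC : ∀ ρ, |g ρ| ≤ C)
    (hg'C : ∀ ρ, |g' ρ| ≤ C) (hψ : ContDiff ℝ 1 ψ)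
    (hψ2 : IntegrableOn (fun p => ‖ψ p‖ ^ 2) halfPlane)
    (hdψ : IntegrableOn (fun p => ‖fderiv ℝ ψ p (0, 1)‖ ^ 2) halfPlane) :
    ∫ p in halfPlane, (g' p.2 - g p.2 ^ 2) * ‖ψ p‖ ^ 2 ≤
      ∫ p in halfPlane, ‖fderiv ℝ ψ p (0, 1)‖ ^ 2 := by
  have hgψ := integrableOn_mul_norm_sq_of_bounded (measurable_riccati hg hg'c)
    (fun ρ => abs_sub_sq_le (hg'C ρ) (hgC ρ)) hψ2
  rw [IntegrableOn, restrict_halfPlane] at hψ2 hdψ hgψ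
  rw [restrict_halfPlane, integral_prod _ hgψ, integral_prod _ hdψ]
  refine integral_mono_ae hgψ.integral_prod_left hdψ.integral_prod_left ?_
  filter_upwards [hψ2.prod_right_ae, hdψ.prod_right_ae] with t hψt hdψt
  simp only [← deriv_slice_snd hψ] at hdψt ⊢
  exact integral_riccati_mul_norm_sq_le hg hg'c hgC hg'C
    (hψ.comp (contDiff_const.prodMk contDiff_id)) hψt hdψt

/-- The momentum `κ(ρ)` for which `q_m` restricts to the de Gennes form with potential
`(τ + κ(ρ))²` on the fibre over `ρ`. -/
def fiberMomentum (B : ℝ) (m : ℤ) (ρ : ℝ) : ℝ :=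
  ((m : ℝ) - B / 2) / Real.sqrt B + B ^ (-(1 : ℝ) / 6) * ρ ^ 2 / 2

variable {B : ℝ} {m : ℤ}

lemma qPot_eq (B : ℝ) (m : ℤ) (p : ℝ × ℝ) : qPot B m p = (p.1 + fiberMomentum B m p.2) ^ 2 := by
  rw [qPot, fiberMomentum, add_assoc]

lemma qIntegrand_eq (B : ℝ) (m : ℤ) (ψ : ℝ × ℝ → ℂ) (p : ℝ × ℝ) : qIntegrand B m ψ p =
    ‖fderiv ℝ ψ p (1, 0)‖ ^ 2 + (p.1 + fiberMomentum B m p.2) ^ 2 * ‖ψ p‖ ^ 2 +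
      B ^ (-(1 : ℝ) / 3) * ‖fderiv ℝ ψ p (0, 1)‖ ^ 2 := by
  rw [qIntegrand, qPot_eq]

lemma continuous_fiberMomentum (B : ℝ) (m : ℤ) : Continuous (fiberMomentum B m) := by
  unfold fiberMomentum
  fun_prop

namespace InFormDomain

lemma integrableOn_normal (hψ : InFormDomain B m ψ) (hB : 0 ≤ B) : IntegrableOn
    (fun p => ‖fderiv ℝ ψ p (1, 0)‖ ^ 2 + (p.1 + fiberMomentum B m p.2) ^ 2 * ‖ψ p‖ ^ 2)
    halfPlane := by
  obtain ⟨hψC, -, hq⟩ := hψ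
  have hψc := hψC.continuous
  have hκ := continuous_fiberMomentum B m
  refine hq.mono' (by fun_prop) (ae_of_all _ fun p => ?_)
  rw [norm_of_nonneg (by positivity), qIntegrand_eq]
  exact le_add_of_nonneg_right (by positivity)

lemma integrableOn_tangential (hψ : InFormDomain B m ψ) (hB : 0 < B) :
    IntegrableOn (fun p => ‖fderiv ℝ ψ p (0, 1)‖ ^ 2) halfPlane := by
  obtain ⟨hψC, -, hq⟩ := hψ
  refine (hq.const_mul (B ^ (-(1 : ℝ) / 3))⁻¹).mono' (by fun_prop) (ae_of_all _ fun p => ?_)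
  rw [norm_of_nonneg (by positivity), ← div_eq_inv_mul, le_div_iff₀' (by positivity),
    qIntegrand_eq]
  exact le_add_of_nonneg_left (by positivity)

lemma qForm_eq (hψ : InFormDomain B m ψ) (hB : 0 < B) : qForm B m ψ =
    (∫ p in halfPlane,
      (‖fderiv ℝ ψ p (1, 0)‖ ^ 2 + (p.1 + fiberMomentum B m p.2) ^ 2 * ‖ψ p‖ ^ 2)) +
        B ^ (-(1 : ℝ) / 3) * ∫ p in halfPlane, ‖fderiv ℝ ψ p (0, 1)‖ ^ 2 := by
  simp only [qForm, qIntegrand_eq]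
  rw [integral_add (hψ.integrableOn_normal hB.le) ((hψ.integrableOn_tangential hB).const_mul _),
    integral_const_mul]

lemma integral_mul_norm_sq_le_qForm {g g' w : ℝ → ℝ} {C K : ℝ} (hψ : InFormDomain B m ψ)
    (hB : 0 < B) (hg : ∀ ρ, HasDerivAt g (g' ρ) ρ) (hg'c : Continuous g')
    (hgC : ∀ ρ, |g ρ| ≤ C) (hg'C : ∀ ρ, |g' ρ| ≤ C) (hwm : Measurable w)
    (hwK : ∀ ρ, |w ρ| ≤ K)
    (hw : ∀ ρ, w ρ ≤
      deGennes (fiberMomentum B m ρ) + B ^ (-(1 : ℝ) / 3) * (g' ρ - g ρ ^ 2)) :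
    ∫ p in halfPlane, w p.2 * ‖ψ p‖ ^ 2 ≤ qForm B m ψ := by
  have hβ : 0 ≤ B ^ (-(1 : ℝ) / 3) := by positivity
  obtain ⟨hψC, hψ2, -⟩ := id hψ
  have hwψ := integrableOn_mul_norm_sq_of_bounded hwm hwK hψ2
  have hgψ := (integrableOn_mul_norm_sq_of_bounded (measurable_riccati hg hg'c)
    (fun ρ => abs_sub_sq_le (hg'C ρ) (hgC ρ)) hψ2).const_mul (B ^ (-(1 : ℝ) / 3))
  have hsplit : ∀ p : ℝ × ℝ,
      (w p.2 - B ^ (-(1 : ℝ) / 3) * (g' p.2 - g p.2 ^ 2)) * ‖ψ p‖ ^ 2 =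
        w p.2 * ‖ψ p‖ ^ 2 - B ^ (-(1 : ℝ) / 3) * ((g' p.2 - g p.2 ^ 2) * ‖ψ p‖ ^ 2) :=
    fun p => by ring
  have hnormal := integral_mul_norm_sq_le_of_le_deGennes hψC hψ2 (hψ.integrableOn_normal hB.le)
    (w := fun ρ => w ρ - B ^ (-(1 : ℝ) / 3) * (g' ρ - g ρ ^ 2))
    (by simpa only [hsplit, IntegrableOn] using hwψ.sub' hgψ)
    fun ρ => sub_le_iff_le_add.2 (hw ρ)
  have htangential := mul_le_mul_of_nonneg_left (integral_riccati_mul_norm_sq_le_tangential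
    hg hg'c hgC hg'C hψC hψ2 (hψ.integrableOn_tangential hB)) hβ
  simp only [hsplit] at hnormal
  rw [integral_sub hwψ hgψ, integral_const_mul] at hnormal
  rw [hψ.qForm_eq hB]
  linarith

end InFormDomain

lemma max_fiberMomentum_sub_sq (hB : 0 < B) (m : ℤ) (ξ₀ ρ : ℝ) :
    max (fiberMomentum B m ρ - ξ₀) 0 ^ 2 =
      B ^ (-(1 : ℝ) / 3) * max (delta1 B m ξ₀ + ρ ^ 2 / 2) 0 ^ 2 := by
  have hcube : B ^ (-(1 : ℝ) / 3) = (B ^ (-(1 : ℝ) / 6)) ^ 2 := by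
    rw [← rpow_mul_natCast hB.le]
    norm_num
  have hinv : B ^ (-(1 : ℝ) / 6) * B ^ ((1 : ℝ) / 6) = 1 := by
    rw [← rpow_add hB]
    norm_num
  have hshift : fiberMomentum B m ρ - ξ₀ =
      B ^ (-(1 : ℝ) / 6) * (delta1 B m ξ₀ + ρ ^ 2 / 2) := by
    rw [fiberMomentum, delta1]
    linear_combination (-(((m : ℝ) - B / 2) / Real.sqrt B - ξ₀)) * hinv
  rw [hcube, ← mul_pow, mul_max_of_nonneg _ _ (rpow_nonneg hB.le _), mul_zero, hshift]

end HalfPlane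

section TangentialPotential

variable {c D ε δ ρ : ℝ}

/-- The rescaled lower bound for the effective potential in the tangential variable: the quadratic
growth of the de Gennes energy with constant `c` plus the Riccati term `g' - g²` of
`g = ε arctan`. -/
def tangentialPotential (c ε δ ρ : ℝ) : ℝ :=
  c * max (δ + ρ ^ 2 / 2) 0 ^ 2 + (ε * (1 / (1 + ρ ^ 2)) - (ε * arctan ρ) ^ 2)

lemma abs_arctan_le_two (ρ : ℝ) : |arctan ρ| ≤ 2 := by
  rw [abs_le]
  constructor <;> linarith [arctan_lt_pi_div_two ρ, neg_pi_div_two_lt_arctan ρ, pi_lt_d2]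

lemma abs_mul_arctan_le (ε ρ : ℝ) : |ε * arctan ρ| ≤ 2 * |ε| := by
  rw [abs_mul, mul_comm 2]
  exact mul_le_mul_of_nonneg_left (abs_arctan_le_two ρ) (abs_nonneg ε)

lemma abs_mul_one_div_one_add_sq_le (ε ρ : ℝ) : |ε * (1 / (1 + ρ ^ 2))| ≤ 2 * |ε| := by
  have hinv : 1 / (1 + ρ ^ 2) ≤ 2 := (div_le_iff₀ (by positivity)).2 (by nlinarith)
  rw [abs_mul, abs_of_nonneg (by positivity : 0 ≤ 1 / (1 + ρ ^ 2)), mul_comm 2]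
  exact mul_le_mul_of_nonneg_left hinv (abs_nonneg ε)

lemma add_sub_le_tangentialPotential (c ε δ ρ : ℝ) :
    c * max (δ + ρ ^ 2 / 2) 0 ^ 2 + ε * (1 / (1 + ρ ^ 2)) - 4 * ε ^ 2 ≤
      tangentialPotential c ε δ ρ := by
  have hsq := pow_le_pow_left₀ (abs_nonneg _) (abs_mul_arctan_le ε ρ) 2
  rw [mul_pow, sq_abs, sq_abs] at hsq
  rw [tangentialPotential]
  linarith

lemma le_tangentialPotential_near (hc : 0 ≤ c) (hε : 0 ≤ ε) (hεD : 8 * (5 + 4 * D) * ε ≤ 1)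
    (hρ : ρ ^ 2 ≤ 4 * D + 4) : 4 * ε ^ 2 ≤ tangentialPotential c ε δ ρ := by
  have hinv : 8 * ε ≤ 1 / (1 + ρ ^ 2) := by
    rw [le_div_iff₀ (by positivity)]
    nlinarith
  have hmax : 0 ≤ c * max (δ + ρ ^ 2 / 2) 0 ^ 2 := by positivity
  linarith [add_sub_le_tangentialPotential c ε δ ρ, mul_le_mul_of_nonneg_left hinv hε]

lemma le_tangentialPotential_far (hε : 0 ≤ ε) (hεc : 8 * ε ^ 2 ≤ c) (hδ : |δ| ≤ D)
    (hρ : 4 * D + 4 ≤ ρ ^ 2) : c / 32 * ρ ^ 4 ≤ tangentialPotential c ε δ ρ := by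
  have hD : 0 ≤ D := (abs_nonneg δ).trans hδ
  have hc : 0 ≤ c := by nlinarith
  have hmax : ρ ^ 2 / 4 ≤ max (δ + ρ ^ 2 / 2) 0 :=
    le_trans (by linarith [neg_le_of_abs_le hδ]) (le_max_left _ _)
  have hmax_sq := mul_le_mul_of_nonneg_left (pow_le_pow_left₀ (by positivity) hmax 2) hc
  have hρ4 : 16 ≤ ρ ^ 4 := by nlinarith
  have hinv : 0 ≤ ε * (1 / (1 + ρ ^ 2)) := by positivity
  nlinarith [add_sub_le_tangentialPotential c ε δ ρ, mul_le_mul_of_nonneg_left hρ4 hc]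

lemma exists_le_tangentialPotential (hc : 0 < c) (hD : 0 < D) :
    ∃ ε C₁ C₂ Mt : ℝ, 0 < C₁ ∧ 0 < C₂ ∧ 0 < Mt ∧ ∀ δ, |δ| ≤ D →
      (∀ ρ, C₁ ≤ tangentialPotential c ε δ ρ) ∧
        ∀ M, Mt < M → ∀ ρ, M ≤ |ρ| → C₂ * M ^ 4 ≤ tangentialPotential c ε δ ρ := by
  set ε := min (1 / (8 * (5 + 4 * D))) (c / 8)
  have hε : 0 < ε := by positivity
  have hεD : 8 * (5 + 4 * D) * ε ≤ 1 := (le_div_iff₀' (by positivity)).1 (min_le_left _ _)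
  have hεc : 8 * ε ^ 2 ≤ c := by nlinarith [min_le_right (1 / (8 * (5 + 4 * D))) (c / 8)]
  refine ⟨ε, 4 * ε ^ 2, c / 32, 4 * D + 4, by positivity, by positivity, by positivity,
    fun δ hδ => ⟨fun ρ => ?_, fun M hM ρ hρ => ?_⟩⟩
  · rcases le_total (ρ ^ 2) (4 * D + 4) with hnear | hfar
    · exact le_tangentialPotential_near hc.le hε.le hεD hnear
    · refine le_trans ?_ (le_tangentialPotential_far hε.le hεc hδ hfar)
      have hρ4 : 16 ≤ ρ ^ 4 := by nlinarith
      nlinarith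
  · have hM0 : 0 ≤ M := by linarith
    have hM4 : M ^ 4 ≤ ρ ^ 4 := by
      simpa only [Even.pow_abs (by decide : Even 4)] using pow_le_pow_left₀ hM0 hρ 4
    have hfar : 4 * D + 4 ≤ ρ ^ 2 := by
      rw [← sq_abs]
      nlinarith
    exact (mul_le_mul_of_nonneg_left hM4 (by positivity)).trans
      (le_tangentialPotential_far hε.le hεc hδ hfar)

end TangentialPotential

lemma Theta0_add_tangentialPotential_le {c ξ₀ B : ℝ} (hB : 0 < B)
    (hgrowth : ∀ ξ, Theta0 + c * max (ξ - ξ₀) 0 ^ 2 ≤ deGennes ξ) (m : ℤ) (ε ρ : ℝ) :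
    Theta0 + B ^ (-(1 : ℝ) / 3) * tangentialPotential c ε (delta1 B m ξ₀) ρ ≤
      deGennes (fiberMomentum B m ρ) +
        B ^ (-(1 : ℝ) / 3) * (ε * (1 / (1 + ρ ^ 2)) - (ε * arctan ρ) ^ 2) := by
  have := hgrowth (fiberMomentum B m ρ)
  rw [max_fiberMomentum_sub_sq hB] at this
  rw [tangentialPotential]
  linarith

theorem statement7_general {ξ₀ : ℝ} (hξ₀ : deGennes ξ₀ = Theta0) {D : ℝ} (hD : 0 < D) :
    ∃ C₁ C₂ Mt : ℝ, 0 < C₁ ∧ 0 < C₂ ∧ 0 < Mt ∧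
      ∀ M : ℝ, Mt < M → ∀ B : ℝ, 0 < B → ∀ m : ℤ,
        |delta1 B m ξ₀| ≤ D →
        ∀ ψ : ℝ × ℝ → ℂ, InFormDomain B m ψ →
          (∫ p in halfPlane,
              (if |p.2| < M then Theta0 + C₁ * B ^ (-(1:ℝ)/3)
                else Theta0 + C₂ * M ^ 4 * B ^ (-(1:ℝ)/3)) * ‖ψ p‖ ^ 2)
            ≤ qForm B m ψ := by
  obtain ⟨c, hc, hgrowth⟩ := exists_quadratic_le_deGennes hξ₀
  obtain ⟨ε, C₁, C₂, Mt, hC₁, hC₂, hMt, hpotential⟩ := exists_le_tangentialPotential hc hD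
  refine ⟨C₁, C₂, Mt, hC₁, hC₂, hMt, fun M hM B hB m hδ ψ hψ => ?_⟩
  obtain ⟨hnear, hfar⟩ := hpotential _ hδ
  have hcont : Continuous fun ρ : ℝ => ε * (1 / (1 + ρ ^ 2)) :=
    continuous_const.mul (continuous_const.div (by fun_prop) fun ρ => by positivity)
  have hstep : Measurable fun ρ : ℝ => if |ρ| < M then Theta0 + C₁ * B ^ (-(1 : ℝ) / 3)
      else Theta0 + C₂ * M ^ 4 * B ^ (-(1 : ℝ) / 3) :=
    Measurable.ite (measurableSet_lt continuous_abs.measurable measurable_const)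
      measurable_const measurable_const
  refine hψ.integral_mul_norm_sq_le_qForm hB (fun ρ => (hasDerivAt_arctan ρ).const_mul ε) hcont
    (abs_mul_arctan_le ε) (abs_mul_one_div_one_add_sq_le ε) hstep
    (fun ρ => (apply_ite abs _ _ _).trans_le (ite_le_sup _ _ _)) fun ρ => ?_
  refine le_trans ?_ (Theta0_add_tangentialPotential_le hB hgrowth m ε ρ)
  split_ifs with hρ <;> rw [mul_comm _ (B ^ (-(1 : ℝ) / 3))] <;> gcongr
  exacts [hnear ρ, hfar M hM ρ (not_lt.1 hρ)]

/-- Lemma 2.11: lower bound `q_m[ψ] ≥ ∫ W_B(ρ)|ψ|²` for bounded `δ̃₁`. -/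
theorem statement7
    (ξ₀ : ℝ) (hξ₀ : deGennes ξ₀ = Theta0)
    (hξ₀uniq : ∀ ξ : ℝ, deGennes ξ = Theta0 → ξ = ξ₀)
    (D : ℝ) (hD : 0 < D) :
    ∃ C₁ C₂ Mt B₀ : ℝ, 0 < C₁ ∧ 0 < C₂ ∧ 0 < Mt ∧ 0 < B₀ ∧
      ∀ M : ℝ, Mt < M → ∀ B : ℝ, B₀ < B → ∀ m : ℤ,
        |delta1 B m ξ₀| ≤ D →
        ∀ ψ : ℝ × ℝ → ℂ, InFormDomain B m ψ →
          (∫ p in halfPlane,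
              (if |p.2| < M then Theta0 + C₁ * B ^ (-(1:ℝ)/3)
                else Theta0 + C₂ * M ^ 4 * B ^ (-(1:ℝ)/3)) * ‖ψ p‖ ^ 2)
            ≤ qForm B m ψ := by
  obtain ⟨C₁, C₂, Mt, hC₁, hC₂, hMt, hbound⟩ := statement7_general hξ₀ hD
  exact ⟨C₁, C₂, Mt, 1, hC₁, hC₂, hMt, one_pos, fun M hM B hB => hbound M hM B (one_pos.trans hB)⟩
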